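/- Let (X,d,f) be a TDS, K ⊆ X, α ≥ 0, and φ ∈ C(X,ℝ) with φ > 0. Then the weighted α-BS dimension coincides with the α-BS dimension: dim_BS^{α,W}(f,K,φ) = dim_BS^α(f,K,φ). -/

import Mathlib

open Filter Set MeasureTheory ENNReal
open scoped Classical NNReal

noncomputable section

namespace AlphaBS

variable {X : Type*}

/-- Birkhoff sum `S_n φ (x) = ∑_{j<n} φ(f^j x)`. -/
def birk (f : X → X) (φ : X → ℝ) (n : ℕ) (x : X) : ℝ :=
  ∑ j ∈ Finset.range n, φ (f^[j] x)

/-- The α-Bowen ball `B_n^α(x,ε) = {y : d_n^α(x,y) < ε}`, where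
`d_n^α(x,y) = max_{0 ≤ i ≤ n-1} e^{αi} d(f^i x, f^i y)`, w.r.t. an explicit distance `d`. -/
def bowenBall (d : X → X → ℝ) (f : X → X) (α : ℝ) (n : ℕ) (x : X) (ε : ℝ) : Set X :=
  {y | ∀ i < n, Real.exp (α * i) * d (f^[i] x) (f^[i] y) < ε}

section covers

variable (d : X → X → ℝ) (f : X → X)

/-- `M^α(K,s,ε,n,φ)`: infimum over countable families of α-Bowen balls covering `K`. -/
def Mpre (φ : X → ℝ) (α s ε : ℝ) (N : ℕ) (K : Set X) : ℝ≥0∞ :=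
  ⨅ (c : ℕ → X) (m : ℕ → ℕ) (I : Set ℕ) (_ : I.Nonempty) (_ : ∀ i ∈ I, N ≤ m i)
    (_ : K ⊆ ⋃ i ∈ I, bowenBall d f α (m i) (c i) ε),
    ∑' i : I, ENNReal.ofReal
      (Real.exp (-s * sSup (birk f φ (m i) '' bowenBall d f α (m i) (c i) ε)))

/-- `M^α(K,s,ε,φ) = lim_{n→∞} M^α(K,s,ε,n,φ)` (the quantity is nondecreasing in `n`). -/
def Mlim (φ : X → ℝ) (α s ε : ℝ) (K : Set X) : ℝ≥0∞ := ⨆ N : ℕ, Mpre d f φ α s ε N K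

/-- `M^α(K,ε,φ) = inf {s ≥ 0 : M^α(K,s,ε,φ) = 0}`. -/
def Mcrit (φ : X → ℝ) (α ε : ℝ) (K : Set X) : EReal :=
  ⨅ (s : ℝ) (_ : 0 ≤ s) (_ : Mlim d f φ α s ε K = 0), (s : EReal)

/-- The α-BS dimension `dim_BS^α(f,K,φ) = lim_{ε→0} M^α(K,ε,φ)`
(the quantity is nonincreasing in `ε`). -/
def dimBS (φ : X → ℝ) (α : ℝ) (K : Set X) : EReal :=
  ⨆ (ε : ℝ) (_ : 0 < ε), Mcrit d f φ α ε K

/-- `M^{α,1}(K,s,ε,n,φ)`: the variant with weights `exp(-s·S_{n_i}φ(x_i))` at the centers. -/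
def M1pre (φ : X → ℝ) (α s ε : ℝ) (N : ℕ) (K : Set X) : ℝ≥0∞ :=
  ⨅ (c : ℕ → X) (m : ℕ → ℕ) (I : Set ℕ) (_ : I.Nonempty) (_ : ∀ i ∈ I, N ≤ m i)
    (_ : K ⊆ ⋃ i ∈ I, bowenBall d f α (m i) (c i) ε),
    ∑' i : I, ENNReal.ofReal (Real.exp (-s * birk f φ (m i) (c i)))

def M1lim (φ : X → ℝ) (α s ε : ℝ) (K : Set X) : ℝ≥0∞ := ⨆ N : ℕ, M1pre d f φ α s ε N K

def M1crit (φ : X → ℝ) (α ε : ℝ) (K : Set X) : EReal :=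
  ⨅ (s : ℝ) (_ : 0 ≤ s) (_ : M1lim d f φ α s ε K = 0), (s : EReal)

/-- The modified α-BS dimension `\widetilde{dim}_{BS}^α(f,K,φ)`. -/
def dimBS1 (φ : X → ℝ) (α : ℝ) (K : Set X) : EReal :=
  ⨆ (ε : ℝ) (_ : 0 < ε), M1crit d f φ α ε K

/-- `M^α(K,s,ε,n,1)`: covering quantity with weights `exp(-s n_i)`. -/
def Epre (α s ε : ℝ) (N : ℕ) (K : Set X) : ℝ≥0∞ :=
  ⨅ (c : ℕ → X) (m : ℕ → ℕ) (I : Set ℕ) (_ : I.Nonempty) (_ : ∀ i ∈ I, N ≤ m i)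
    (_ : K ⊆ ⋃ i ∈ I, bowenBall d f α (m i) (c i) ε),
    ∑' i : I, ENNReal.ofReal (Real.exp (-s * (m i : ℝ)))

def Elim (α s ε : ℝ) (K : Set X) : ℝ≥0∞ := ⨆ N : ℕ, Epre d f α s ε N K

def Ecrit (α ε : ℝ) (K : Set X) : EReal :=
  ⨅ (s : ℝ) (_ : 0 ≤ s) (_ : Elim d f α s ε K = 0), (s : EReal)

/-- The α-Bowen topological entropy `h_top^{α,B}(f,K)` (i.e. `dim_BS^α(f,K,1)`,
computed with weights `exp(-s n_i)`). -/
def entB (α : ℝ) (K : Set X) : EReal := ⨆ (ε : ℝ) (_ : 0 < ε), Ecrit d f α ε K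

/-- `ℳ_B^α(K,s,ε,n,h)`: the Pesin pressure covering quantity. -/
def Ppre (h : X → ℝ) (α s ε : ℝ) (N : ℕ) (K : Set X) : ℝ≥0∞ :=
  ⨅ (c : ℕ → X) (m : ℕ → ℕ) (I : Set ℕ) (_ : I.Nonempty) (_ : ∀ i ∈ I, N ≤ m i)
    (_ : K ⊆ ⋃ i ∈ I, bowenBall d f α (m i) (c i) ε),
    ∑' i : I, ENNReal.ofReal
      (Real.exp (-s * (m i : ℝ) + sSup (birk f h (m i) '' bowenBall d f α (m i) (c i) ε)))

def Plim (h : X → ℝ) (α s ε : ℝ) (K : Set X) : ℝ≥0∞ := ⨆ N : ℕ, Ppre d f h α s ε N K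

/-- `ℳ_B^α(K,ε,h) = inf {s ∈ ℝ : ℳ_B^α(K,s,ε,h) = 0}`. -/
def Pcrit (h : X → ℝ) (α ε : ℝ) (K : Set X) : EReal :=
  ⨅ (s : ℝ) (_ : Plim d f h α s ε K = 0), (s : EReal)

/-- The α-Pesin topological pressure `P_B^α(f,K,h)`. -/
def pressureB (h : X → ℝ) (α : ℝ) (K : Set X) : EReal :=
  ⨆ (ε : ℝ) (_ : 0 < ε), Pcrit d f h α ε K

/-- `W^α(K,s,ε,n,φ)`: the weighted covering quantity. -/
def Wpre (φ : X → ℝ) (α s ε : ℝ) (N : ℕ) (K : Set X) : ℝ≥0∞ :=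
  ⨅ (c : ℕ → X) (m : ℕ → ℕ) (w : ℕ → ℝ) (I : Set ℕ) (_ : I.Nonempty)
    (_ : ∀ i ∈ I, N ≤ m i) (_ : ∀ i ∈ I, 0 < w i)
    (_ : ∀ x ∈ K, (1 : ℝ≥0∞) ≤
      ∑' i : I, (bowenBall d f α (m i) (c i) ε).indicator
        (fun _ => ENNReal.ofReal (w i)) x),
    ∑' i : I, ENNReal.ofReal (w i * Real.exp (-s * birk f φ (m i) (c i)))

def Wlim (φ : X → ℝ) (α s ε : ℝ) (K : Set X) : ℝ≥0∞ := ⨆ N : ℕ, Wpre d f φ α s ε N K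

def Wcrit (φ : X → ℝ) (α ε : ℝ) (K : Set X) : EReal :=
  ⨅ (s : ℝ) (_ : 0 ≤ s) (_ : Wlim d f φ α s ε K = 0), (s : EReal)

/-- The weighted α-BS dimension `dim_BS^{α,W}(f,K,φ)`. -/
def dimBSW (φ : X → ℝ) (α : ℝ) (K : Set X) : EReal :=
  ⨆ (ε : ℝ) (_ : 0 < ε), Wcrit d f φ α ε K

/-- `r_n(f,α,X,ε)`: the smallest cardinality of an `(n,α,ε)`-spanning set of `X`. -/
def spanNum (α ε : ℝ) (n : ℕ) : ℕ :=
  sInf {m : ℕ | ∃ E : Finset X, E.card = m ∧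
    ∀ x : X, ∃ y ∈ E, ∀ i < n, Real.exp (α * i) * d (f^[i] y) (f^[i] x) < ε}

/-- `h_top^α(f,X,ε) = limsup_n (1/n) log r_n(f,α,X,ε)`. -/
def htopSpanE (α ε : ℝ) : EReal :=
  limsup (fun n : ℕ => ((Real.log (spanNum d f α ε n) / n : ℝ) : EReal)) atTop

/-- the α-topological entropy `h_top^α(f,X) = lim_{ε→0} h_top^α(f,X,ε)`
(the quantity is nonincreasing in `ε`). -/
def htopSpan (α : ℝ) : EReal := ⨆ (ε : ℝ) (_ : 0 < ε), htopSpanE d f α ε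

/-- `r_n(X, e^{-nε})`: smallest number of ε-neutralized Bowen balls needed to cover `X`. -/
def neutNum (ε : ℝ) (n : ℕ) : ℕ :=
  sInf {m : ℕ | ∃ E : Finset X, E.card = m ∧
    ∀ x : X, ∃ y ∈ E, ∀ j < n, d (f^[j] y) (f^[j] x) < Real.exp (-(n : ℝ) * ε)}

/-- the neutralized ε-topological entropy. -/
def neutEntE (ε : ℝ) : EReal :=
  limsup (fun n : ℕ => ((Real.log (neutNum d f ε n) / n : ℝ) : EReal)) atTop

/-- the neutralized topological entropy `\tilde h_top(f,X) = inf_{ε>0} \tilde h_top(f,X,ε)`. -/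
def neutEnt : EReal := ⨅ (ε : ℝ) (_ : 0 < ε), neutEntE d f ε

end covers

/-- `-log t`, valued in `[0,∞]` for `t ∈ [0,1]`, with `-log 0 = ∞`. -/
def negLog (t : ℝ≥0∞) : ℝ≥0∞ := if t = 0 then ⊤ else ENNReal.ofReal (-Real.log t.toReal)

section measure

variable [MeasurableSpace X]

/-- `P_μ^α(f,x,φ) = lim_{ε→0} liminf_n (-log μ(B_n^α(x,ε)))/S_nφ(x)`. -/
def localBKphi (d : X → X → ℝ) (f : X → X) (φ : X → ℝ) (α : ℝ) (μ : Measure X)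
    (x : X) : ℝ≥0∞ :=
  ⨆ (ε : ℝ) (_ : 0 < ε),
    liminf (fun n : ℕ =>
      negLog (μ (bowenBall d f α n x ε)) / ENNReal.ofReal (birk f φ n x)) atTop

/-- The α-local Brin–Katok entropy `P_μ^α(f,φ) = ∫ P_μ^α(f,x,φ) dμ(x)`. -/
def BKphi (d : X → X → ℝ) (f : X → X) (φ : X → ℝ) (α : ℝ) (μ : Measure X) : ℝ≥0∞ :=
  ∫⁻ x, localBKphi d f φ α μ x ∂μ

/-- `lim_{ε→0} liminf_n (-log μ(B_n^α(x,ε)))/n`. -/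
def localBKn (d : X → X → ℝ) (f : X → X) (α : ℝ) (μ : Measure X) (x : X) : ℝ≥0∞ :=
  ⨆ (ε : ℝ) (_ : 0 < ε),
    liminf (fun n : ℕ => negLog (μ (bowenBall d f α n x ε)) / (n : ℝ≥0∞)) atTop

/-- The lower α-local Brin–Katok entropy `\underline h_μ^{BK}(f,α)`. -/
def BKn (d : X → X → ℝ) (f : X → X) (α : ℝ) (μ : Measure X) : ℝ≥0∞ :=
  ∫⁻ x, localBKn d f α μ x ∂μ

end measure

/-- diameter of a set w.r.t. an explicit distance. -/
def ediamD (d : X → X → ℝ) (U : Set X) : ℝ≥0∞ :=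
  ⨆ (x ∈ U) (y ∈ U), ENNReal.ofReal (d x y)

/-- pre-Hausdorff measure at scale `δ`. -/
def hausPre (d : X → X → ℝ) (s δ : ℝ) (E : Set X) : ℝ≥0∞ :=
  ⨅ (U : ℕ → Set X) (_ : E ⊆ ⋃ i, U i) (_ : ∀ i, ediamD d (U i) ≤ ENNReal.ofReal δ),
    ∑' i, ediamD d (U i) ^ s

/-- `s`-dimensional Hausdorff measure w.r.t. an explicit distance. -/
def hausMeas (d : X → X → ℝ) (s : ℝ) (E : Set X) : ℝ≥0∞ :=
  ⨆ (δ : ℝ) (_ : 0 < δ), hausPre d s δ E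

/-- Hausdorff dimension w.r.t. an explicit distance:
`dim_H(E,d) = inf {s ≥ 0 : H^s(E) = 0}`. -/
def hausDim (d : X → X → ℝ) (E : Set X) : ℝ≥0∞ :=
  ⨅ (s : ℝ≥0) (_ : hausMeas d s E = 0), (s : ℝ≥0∞)

/-- The left shift on `Σ_k^+ = {0,…,k-1}^ℕ`. -/
def shiftMap (k : ℕ) : (ℕ → Fin k) → (ℕ → Fin k) := fun x n => x (n + 1)

/-- The metric `d(x,y) = e^{-n(x,y)}` on `Σ_k^+`, where `n(x,y)` is the least index
at which `x` and `y` differ, and `d(x,x) = 0`. -/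
def shiftDist {k : ℕ} (x y : ℕ → Fin k) : ℝ :=
  if x = y then 0 else Real.exp (-((sInf {n : ℕ | x n ≠ y n} : ℕ) : ℝ))

/-- The subshift of finite type `Σ_A^+` determined by the incidence matrix `A`. -/
def SFT {k : ℕ} (A : Matrix (Fin k) (Fin k) ℝ) : Type :=
  {x : ℕ → Fin k // ∀ n, A (x n) (x (n + 1)) = 1}

/-- The left shift restricted to `Σ_A^+`. -/
def sftShift {k : ℕ} (A : Matrix (Fin k) (Fin k) ℝ) : SFT A → SFT A :=
  fun x => ⟨fun n => x.1 (n + 1), fun n => x.2 (n + 1)⟩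

/-- The metric `d` restricted to `Σ_A^+`. -/
def sftDist {k : ℕ} (A : Matrix (Fin k) (Fin k) ℝ) : SFT A → SFT A → ℝ :=
  fun x y => shiftDist x.1 y.1

end AlphaBS

open AlphaBS

/-!
A cover is a weighted cover with weights `1`; by uniform continuity and the positive lower bound
of `φ`, the suprema of `S_nφ` over small Bowen balls exceed the values at the centers at most by a
factor arbitrarily close to `1`, which gives `dim^W ≤ dim`.

Conversely, let a weighted cover of `K` by balls of radius `ε` be given and fix `r < 1`. Since
`∑ (1 - r) rⁿ = 1`, for every `x ∈ K` there is a time `n` such that the balls of time `n` carry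
mass at least `(1 - r) rⁿ` at `x`. Take a maximal `2ε`-separated subset, for the Bowen metric of
time `n`, of the set of these `x`: the balls of radius `2ε` around it cover the set, while each
ball of the weighted cover contains at most one of its points. So the cost of this cover is at
most `((1 - r) rⁿ)⁻¹` times the cost of the time `n` part of the weighted cover. If `a ≤ φ`, then
raising `s` to `s + δ` gains a factor `rⁿ` with `r = exp (-δa)`, which absorbs the loss.
-/

namespace AlphaBS

section Covering

variable {X ι : Type*}

theorem exists_isSeparated_isCover (R : SetRel X X) [R.IsRefl] [R.IsSymm] (A : Set X) :
    ∃ E ⊆ A, R.IsSeparated E ∧ R.IsCover A E := by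
  obtain ⟨E, hE⟩ := zorn_subset {E : Set X | E ⊆ A ∧ R.IsSeparated E} fun C hC hchain =>
    ⟨⋃₀ C, ⟨sUnion_subset fun _ hs => (hC hs).1,
      (pairwise_sUnion hchain.directedOn).2 fun _ hs => (hC hs).2⟩,
      fun _ => subset_sUnion_of_mem⟩
  exact ⟨E, hE.prop.1, hE.prop.2, .of_maximal_isSeparated hE⟩

theorem exists_mem_of_tsum_indicator_ne_zero {B : ι → Set X} {w : ι → ℝ≥0∞} {x : X}
    (h : ∑' i, (B i).indicator (fun _ => w i) x ≠ 0) : ∃ i, x ∈ B i := by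
  contrapose! h
  exact ENNReal.tsum_eq_zero.2 fun i => indicator_of_notMem (h i) _

theorem tsum_indicator_const_le_of_subsingleton {E B : Set X} (h : (E ∩ B).Subsingleton)
    (v : ℝ≥0∞) : ∑' x : E, B.indicator (fun _ => v) (x : X) ≤ v := by
  rw [tsum_subtype, indicator_indicator]
  obtain hempty | ⟨y, hy⟩ := h.eq_empty_or_singleton
  · simp [hempty]
  · rw [hy, ← tsum_subtype]
    exact (tsum_singleton y fun _ => v).le

theorem mul_tsum_le_of_inter_subsingleton {E : Set X} {B : ι → Set X} {w h : ι → ℝ≥0∞}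
    {g : X → ℝ≥0∞} {t : ℝ≥0∞} (hEB : ∀ i, (E ∩ B i).Subsingleton)
    (hE : ∀ x ∈ E, t ≤ ∑' i, (B i).indicator (fun _ => w i) x)
    (hgh : ∀ i, ∀ x ∈ B i, g x ≤ h i) :
    t * ∑' x : E, g x ≤ ∑' i, w i * h i := by
  have indicator_mul_le (i : ι) (x : X) :
      (B i).indicator (fun _ => w i) x * g x ≤ (B i).indicator (fun _ => w i * h i) x := by
    by_cases hx : x ∈ B i
    · simpa only [indicator_of_mem hx] using mul_le_mul_right (hgh i x hx) (w i)
    · simp only [indicator_of_notMem hx, zero_mul, le_refl]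
  calc t * ∑' x : E, g x
      = ∑' x : E, t * g x := ENNReal.tsum_mul_left.symm
    _ ≤ ∑' x : E, ∑' i, (B i).indicator (fun _ => w i * h i) (x : X) := by
        refine ENNReal.tsum_le_tsum fun x => (mul_le_mul_left (hE x x.2) (g x)).trans ?_
        rw [← ENNReal.tsum_mul_right]
        exact ENNReal.tsum_le_tsum fun i => indicator_mul_le i x
    _ = ∑' i, ∑' x : E, (B i).indicator (fun _ => w i * h i) (x : X) := ENNReal.tsum_comm
    _ ≤ ∑' i, w i * h i :=
        ENNReal.tsum_le_tsum fun i => tsum_indicator_const_le_of_subsingleton (hEB i) _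

theorem exists_countable_isCover_mul_tsum_le [Countable ι] {R : SetRel X X} [R.IsRefl] [R.IsSymm]
    {A : Set X} {B : ι → Set X} {w h : ι → ℝ≥0∞} {g : X → ℝ≥0∞} {t : ℝ≥0∞} (ht : t ≠ 0)
    (hB : ∀ i, ∀ x ∈ B i, ∀ y ∈ B i, (x, y) ∈ R)
    (hA : ∀ x ∈ A, t ≤ ∑' i, (B i).indicator (fun _ => w i) x)
    (hgh : ∀ i, ∀ x ∈ B i, g x ≤ h i) :
    ∃ E ⊆ A, E.Countable ∧ R.IsCover A E ∧ t * ∑' x : E, g x ≤ ∑' i, w i * h i := by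
  obtain ⟨E, hEA, hsep, hcover⟩ := exists_isSeparated_isCover R A
  have hEB (i : ι) : (E ∩ B i).Subsingleton := fun x hx y hy =>
    by_contra fun hxy => hsep hx.1 hy.1 hxy (hB i x hx.2 y hy.2)
  have hE_subset : E ⊆ ⋃ i, E ∩ B i := fun x hx =>
    have ⟨i, hi⟩ := exists_mem_of_tsum_indicator_ne_zero
      ((pos_iff_ne_zero.2 ht).trans_le (hA x (hEA hx))).ne'
    mem_iUnion.2 ⟨i, hx, hi⟩
  exact ⟨E, hEA, (countable_iUnion fun i => (hEB i).countable).mono hE_subset, hcover,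
    mul_tsum_le_of_inter_subsingleton hEB (fun x hx => hA x (hEA hx)) hgh⟩

theorem exists_one_sub_mul_pow_le {r : ℝ≥0∞} (hr : r < 1) {g : ℕ → ℝ≥0∞} (hg : 1 ≤ ∑' n, g n) :
    ∃ n, (1 - r) * r ^ n ≤ g n := by
  by_contra! hlt
  have hsum : ∑' n, (1 - r) * r ^ n = 1 := by
    rw [ENNReal.tsum_mul_left, ENNReal.tsum_geometric]
    exact ENNReal.mul_inv_cancel (tsub_pos_of_lt hr).ne' (ENNReal.sub_ne_top ENNReal.one_ne_top)
  have hle : ∑' n, g n ≤ 1 := hsum ▸ ENNReal.tsum_le_tsum fun n => (hlt n).le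
  have hlt_one : ∑' n, g n < 1 :=
    hsum ▸ ENNReal.tsum_lt_tsum (hle.trans_lt ENNReal.one_lt_top).ne (fun n => (hlt n).le) (hlt 0)
  exact hlt_one.not_ge hg

end Covering

section Birkhoff

variable {X : Type*} {f : X → X} {φ : X → ℝ}

theorem natCast_mul_le_birk {a : ℝ} (ha : ∀ x, a ≤ φ x) (n : ℕ) (x : X) :
    n * a ≤ birk f φ n x := by
  simpa only [birk, Finset.card_range, nsmul_eq_mul] using
    Finset.card_nsmul_le_sum (Finset.range n) (fun j => φ (f^[j] x)) a fun j _ => ha _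

theorem bddAbove_birk_image (hφ : BddAbove (range φ)) (n : ℕ) (s : Set X) :
    BddAbove (birk f φ n '' s) := by
  obtain ⟨b, hb⟩ := hφ
  refine ⟨n * b, forall_mem_image.2 fun x _ => ?_⟩
  simpa only [birk, Finset.card_range, nsmul_eq_mul] using
    Finset.sum_le_card_nsmul (Finset.range n) (fun j => φ (f^[j] x)) b
      fun j _ => hb (mem_range_self _)

end Birkhoff

section BowenBall

variable {X : Type*} [PseudoMetricSpace X] {f : X → X} {φ : X → ℝ} {α ε : ℝ} {n : ℕ} {x y z : X}

theorem mem_bowenBall_self (hε : 0 < ε) : x ∈ bowenBall dist f α n x ε := fun i _ => by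
  simpa only [dist_self, mul_zero] using hε

theorem mem_bowenBall_comm : y ∈ bowenBall dist f α n x ε ↔ x ∈ bowenBall dist f α n y ε := by
  simp only [bowenBall, mem_ofPred_eq, dist_comm]

theorem bowenBall_mono {ε' : ℝ} (h : ε ≤ ε') :
    bowenBall dist f α n x ε ⊆ bowenBall dist f α n x ε' :=
  fun _ hy i hi => (hy i hi).trans_le h

theorem mem_bowenBall_two_mul (hx : x ∈ bowenBall dist f α n z ε)
    (hy : y ∈ bowenBall dist f α n z ε) : y ∈ bowenBall dist f α n x (2 * ε) := fun i hi =>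
  calc Real.exp (α * i) * dist (f^[i] x) (f^[i] y)
      ≤ Real.exp (α * i) * (dist (f^[i] z) (f^[i] x) + dist (f^[i] z) (f^[i] y)) := by
        gcongr
        exact dist_triangle_left ..
    _ < 2 * ε := by linarith [hx i hi, hy i hi]

theorem dist_iterate_lt_of_mem_bowenBall (hα : 0 ≤ α) (hy : y ∈ bowenBall dist f α n x ε) {i : ℕ}
    (hi : i < n) : dist (f^[i] x) (f^[i] y) < ε :=
  (le_mul_of_one_le_left dist_nonneg (Real.one_le_exp (by positivity))).trans_lt (hy i hi)

theorem birk_le_mul_birk_of_mem_bowenBall (hα : 0 ≤ α) {q : ℝ}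
    (hq : ∀ x y, dist x y < ε → φ y ≤ q * φ x) (hy : y ∈ bowenBall dist f α n x ε) :
    birk f φ n y ≤ q * birk f φ n x := by
  rw [birk, birk, Finset.mul_sum]
  exact Finset.sum_le_sum fun j hj =>
    hq _ _ (dist_iterate_lt_of_mem_bowenBall hα hy (Finset.mem_range.1 hj))

/-- The relation `d_n^α(x, y) < ε`, with which nets for the α-Bowen metric are expressed through
`SetRel.IsSeparated` and `SetRel.IsCover`. -/
def bowenRel (f : X → X) (α : ℝ) (n : ℕ) (ε : ℝ) : SetRel X X :=
  {p | p.2 ∈ bowenBall dist f α n p.1 ε}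

theorem isRefl_bowenRel (hε : 0 < ε) : (bowenRel f α n ε).IsRefl :=
  ⟨fun _ => mem_bowenBall_self hε⟩

instance isSymm_bowenRel : (bowenRel f α n ε).IsSymm := ⟨fun _ _ => mem_bowenBall_comm.1⟩

end BowenBall

section Weight

variable {X : Type*} [PseudoMetricSpace X] {f : X → X} {φ : X → ℝ} {α s ε : ℝ} {n : ℕ} {x c : X}

/-- The weight `exp (-s · S_nφ(x))` of the ball `B_n^α(x, ε)` in the sums defining `W^α`. -/
def centerWeight (f : X → X) (φ : X → ℝ) (s : ℝ) (n : ℕ) (x : X) : ℝ≥0∞ :=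
  ENNReal.ofReal (Real.exp (-s * birk f φ n x))

/-- The weight `exp (-s · sup_{B_n^α(x, ε)} S_nφ)` of the ball `B_n^α(x, ε)` in the sums
defining `M^α`. -/
def supWeight (f : X → X) (φ : X → ℝ) (α s ε : ℝ) (n : ℕ) (x : X) : ℝ≥0∞ :=
  ENNReal.ofReal (Real.exp (-s * sSup (birk f φ n '' bowenBall dist f α n x ε)))

theorem centerWeight_mul_le_supWeight (hα : 0 ≤ α) (hs : 0 ≤ s) (hε : 0 < ε) {q : ℝ}
    (hq : ∀ x y, dist x y < ε → φ y ≤ q * φ x) :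
    centerWeight f φ (q * s) n x ≤ supWeight f φ α s ε n x := by
  have hsup : sSup (birk f φ n '' bowenBall dist f α n x ε) ≤ q * birk f φ n x :=
    csSup_le (Nonempty.image _ ⟨x, mem_bowenBall_self hε⟩) <|
      forall_mem_image.2 fun y hy => birk_le_mul_birk_of_mem_bowenBall hα hq hy
  refine ENNReal.ofReal_le_ofReal (Real.exp_le_exp.2 ?_)
  linarith [mul_le_mul_of_nonneg_left hsup hs]

theorem supWeight_le_centerWeight (hφ : BddAbove (range φ)) (hs : 0 ≤ s)
    (hc : c ∈ bowenBall dist f α n x ε) :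
    supWeight f φ α s ε n x ≤ centerWeight f φ s n c := by
  have hsup : birk f φ n c ≤ sSup (birk f φ n '' bowenBall dist f α n x ε) :=
    le_csSup (bddAbove_birk_image hφ n _) (mem_image_of_mem _ hc)
  refine ENNReal.ofReal_le_ofReal (Real.exp_le_exp.2 ?_)
  linarith [mul_le_mul_of_nonneg_left hsup hs]

theorem supWeight_add_le (hφ : BddAbove (range φ)) {a : ℝ} (ha : ∀ x, a ≤ φ x) {δ : ℝ}
    (hδ : 0 ≤ δ) (hε : 0 < ε) :
    supWeight f φ α (s + δ) ε n x ≤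
      ENNReal.ofReal (Real.exp (-(δ * a))) ^ n * supWeight f φ α s ε n x := by
  have hsup : n * a ≤ sSup (birk f φ n '' bowenBall dist f α n x ε) :=
    (natCast_mul_le_birk ha n x).trans <|
      le_csSup (bddAbove_birk_image hφ n _) (mem_image_of_mem _ (mem_bowenBall_self hε))
  rw [supWeight, supWeight, ← ENNReal.ofReal_pow (Real.exp_nonneg _), ← Real.exp_nat_mul,
    ← ENNReal.ofReal_mul (Real.exp_nonneg _), ← Real.exp_add]
  refine ENNReal.ofReal_le_ofReal (Real.exp_le_exp.2 ?_)
  linarith [mul_le_mul_of_nonneg_left hsup hδ]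

theorem ofReal_exp_neg_lt_one {t : ℝ} (ht : 0 < t) : ENNReal.ofReal (Real.exp (-t)) < 1 :=
  ENNReal.ofReal_lt_one.2 (Real.exp_lt_one_iff.2 (neg_neg_of_pos ht))

end Weight

section CoveringSums

variable {X : Type*} [PseudoMetricSpace X] {f : X → X} {φ : X → ℝ} {α s δ a ε : ℝ} {N : ℕ}
  {K : Set X}

theorem Mpre_le_tsum {ι : Type*} [Countable ι] [Nonempty ι] (c : ι → X) (m : ι → ℕ)
    (hm : ∀ i, N ≤ m i) (hK : K ⊆ ⋃ i, bowenBall dist f α (m i) (c i) ε) :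
    Mpre dist f φ α s ε N K ≤ ∑' i, supWeight f φ α s ε (m i) (c i) := by
  obtain ⟨g, hg⟩ := exists_injective_nat ι
  have hinv := Function.leftInverse_invFun hg
  refine iInf_le_of_le (c ∘ Function.invFun g) <| iInf_le_of_le (m ∘ Function.invFun g) <|
    iInf_le_of_le (range g) <| iInf_le_of_le (range_nonempty g) <|
    iInf_le_of_le (fun _ _ => hm _) <| iInf_le_of_le ?_ (le_of_eq ?_)
  · simpa only [biUnion_range, Function.comp_apply, hinv _] using hK
  · refine (tsum_range (fun j => supWeight f φ α s ε ((m ∘ Function.invFun g) j)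
      ((c ∘ Function.invFun g) j)) hg).trans ?_
    simp only [Function.comp_apply, hinv _]

theorem Mpre_empty [Nonempty X] (hφ : BddAbove (range φ)) (ha₀ : 0 < a) (ha : ∀ x, a ≤ φ x)
    (hs : 0 < s) (hε : 0 < ε) : Mpre dist f φ α s ε N ∅ = 0 := by
  obtain ⟨x⟩ := ‹Nonempty X›
  set r := ENNReal.ofReal (Real.exp (-(s * a)))
  have hr_lt : r < 1 := ofReal_exp_neg_lt_one (mul_pos hs ha₀)
  have hle (n : ℕ) (hn : N ≤ n) : Mpre dist f φ α s ε N ∅ ≤ r ^ n :=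
    calc Mpre dist f φ α s ε N ∅
        ≤ ∑' _ : Unit, supWeight f φ α s ε n x :=
          Mpre_le_tsum (fun _ => x) (fun _ => n) (fun _ => hn) (empty_subset _)
      _ = supWeight f φ α (0 + s) ε n x := by rw [tsum_fintype, Fintype.sum_unique, zero_add]
      _ ≤ r ^ n * supWeight f φ α 0 ε n x := supWeight_add_le hφ ha hs.le hε
      _ = r ^ n := by
          rw [supWeight, neg_zero, zero_mul, Real.exp_zero, ENNReal.ofReal_one, mul_one]
  exact nonpos_iff_eq_zero.1 <| ge_of_tendsto
    (ENNReal.tendsto_pow_atTop_nhds_zero_of_lt_one hr_lt) (eventually_atTop.2 ⟨N, hle⟩)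

theorem exists_countable_bowen_cover {ι : Type*} [Countable ι] {A : Set X} {c : ι → X}
    {w : ι → ℝ≥0∞} {n : ℕ} {t : ℝ≥0∞} (hφ : BddAbove (range φ)) (hs : 0 ≤ s) (hε : 0 < ε)
    (ht : t ≠ 0)
    (hA : ∀ x ∈ A, t ≤ ∑' i, (bowenBall dist f α n (c i) ε).indicator (fun _ => w i) x) :
    ∃ E ⊆ A, E.Countable ∧ A ⊆ ⋃ x ∈ E, bowenBall dist f α n x (2 * ε) ∧
      t * ∑' x : E, supWeight f φ α s (2 * ε) n x ≤ ∑' i, w i * centerWeight f φ s n (c i) := by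
  have : (bowenRel f α n (2 * ε)).IsRefl := isRefl_bowenRel (by positivity)
  obtain ⟨E, hEA, hE, hcover, hsum⟩ := exists_countable_isCover_mul_tsum_le
    (R := bowenRel f α n (2 * ε)) (g := supWeight f φ α s (2 * ε) n)
    (h := fun i => centerWeight f φ s n (c i)) ht
    (fun _ _ hx _ hy => mem_bowenBall_two_mul hx hy) hA
    (fun _ _ hx => supWeight_le_centerWeight hφ hs
      (mem_bowenBall_two_mul hx (mem_bowenBall_self hε)))
  refine ⟨E, hEA, hE, fun x hx => ?_, hsum⟩
  obtain ⟨y, hy, hyx⟩ := hcover hx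
  exact mem_biUnion hy (mem_bowenBall_comm.1 hyx)

theorem exists_countable_bowen_covers {ι : Type*} [Countable ι] {c : ι → X} {m : ι → ℕ}
    {w : ι → ℝ≥0∞} {r : ℝ≥0∞} (hφ : BddAbove (range φ)) (hs : 0 ≤ s) (hε : 0 < ε) (hr₀ : r ≠ 0)
    (hr : r < 1) (hm : ∀ i, N ≤ m i)
    (hw : ∀ x ∈ K, 1 ≤ ∑' i, (bowenBall dist f α (m i) (c i) ε).indicator (fun _ => w i) x) :
    ∃ E : ℕ → Set X, (∀ n, (E n).Countable) ∧ (∀ n, ∀ x ∈ E n, N ≤ n) ∧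
      K ⊆ ⋃ n, ⋃ x ∈ E n, bowenBall dist f α n x (2 * ε) ∧
      ∀ n, (1 - r) * r ^ n * ∑' x : E n, supWeight f φ α s (2 * ε) n x ≤
        ∑' i : m ⁻¹' {n}, w i * centerWeight f φ s n (c i) := by
  have ht (n : ℕ) : (1 - r) * r ^ n ≠ 0 :=
    mul_ne_zero (tsub_pos_of_lt hr).ne' (pow_ne_zero n hr₀)
  let massAt (n : ℕ) (x : X) : ℝ≥0∞ :=
    ∑' i : m ⁻¹' {n}, (bowenBall dist f α n (c i) ε).indicator (fun _ => w i) x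
  have hmass (x : X) (hx : x ∈ K) : ∃ n, (1 - r) * r ^ n ≤ massAt n x := by
    refine exists_one_sub_mul_pow_le hr ((hw x hx).trans_eq ?_)
    rw [← ENNReal.tsum_fiberwise _ m]
    exact tsum_congr fun n => tsum_congr fun i => by rw [show m i = n from i.2]
  choose E hEA hE hcover hsum using fun n =>
    exists_countable_bowen_cover (A := {x | (1 - r) * r ^ n ≤ massAt n x})
      hφ hs hε (ht n) fun _ hx => hx
  refine ⟨E, hE, fun n x hx => ?_, fun x hx => ?_, hsum⟩
  · obtain ⟨i, -⟩ := exists_mem_of_tsum_indicator_ne_zero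
      ((pos_iff_ne_zero.2 (ht n)).trans_le (hEA n hx)).ne'
    exact (hm i).trans_eq i.2
  · obtain ⟨n, hn⟩ := hmass x hx
    exact mem_iUnion.2 ⟨n, hcover n hn⟩

theorem one_sub_mul_Mpre_le_tsum [Nonempty X] {ι : Type*} [Countable ι] {c : ι → X} {m : ι → ℕ}
    {w : ι → ℝ≥0∞} (hφ : BddAbove (range φ)) (ha₀ : 0 < a) (ha : ∀ x, a ≤ φ x) (hs : 0 ≤ s)
    (hδ : 0 < δ) (hε : 0 < ε) (hm : ∀ i, N ≤ m i)
    (hw : ∀ x ∈ K, 1 ≤ ∑' i, (bowenBall dist f α (m i) (c i) ε).indicator (fun _ => w i) x) :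
    (1 - ENNReal.ofReal (Real.exp (-(δ * a)))) * Mpre dist f φ α (s + δ) (2 * ε) N K ≤
      ∑' i, w i * centerWeight f φ s (m i) (c i) := by
  have hε₂ : 0 < 2 * ε := by positivity
  obtain rfl | hK := K.eq_empty_or_nonempty
  · rw [Mpre_empty hφ ha₀ ha (add_pos_of_nonneg_of_pos hs hδ) hε₂, mul_zero]
    exact zero_le
  set r := ENNReal.ofReal (Real.exp (-(δ * a)))
  obtain ⟨E, hE, hN, hcover, hsum⟩ := exists_countable_bowen_covers hφ hs hε
    (ENNReal.ofReal_pos.2 (Real.exp_pos _)).ne' (ofReal_exp_neg_lt_one (mul_pos hδ ha₀)) hm hw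
  have hcover' : K ⊆ ⋃ p : Σ n, E n, bowenBall dist f α p.1 p.2 (2 * ε) := by
    simpa only [iUnion_sigma, iUnion_coe_set] using hcover
  have (n : ℕ) : Countable (E n) := (hE n).to_subtype
  have : Nonempty (Σ n, E n) := nonempty_of_nonempty_iUnion (hK.mono hcover')
  calc (1 - r) * Mpre dist f φ α (s + δ) (2 * ε) N K
      ≤ (1 - r) * ∑' p : Σ n, E n, supWeight f φ α (s + δ) (2 * ε) p.1 p.2 := by
        gcongr
        exact Mpre_le_tsum _ _ (fun p => hN p.1 p.2 p.2.2) hcover'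
    _ ≤ (1 - r) * ∑' p : Σ n, E n, r ^ p.1 * supWeight f φ α s (2 * ε) p.1 p.2 := by
        gcongr
        exact supWeight_add_le hφ ha hδ.le hε₂
    _ = ∑' n, (1 - r) * r ^ n * ∑' x : E n, supWeight f φ α s (2 * ε) n x := by
        simp only [ENNReal.tsum_sigma', ENNReal.tsum_mul_left, mul_assoc]
    _ ≤ ∑' n, ∑' i : m ⁻¹' {n}, w i * centerWeight f φ s n (c i) := ENNReal.tsum_le_tsum hsum
    _ = ∑' i, w i * centerWeight f φ s (m i) (c i) := by
        rw [← ENNReal.tsum_fiberwise _ m]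
        exact tsum_congr fun n => tsum_congr fun i => by rw [show m i = n from i.2]

theorem one_sub_mul_Mpre_le_Wpre (hφ : BddAbove (range φ)) (ha₀ : 0 < a) (ha : ∀ x, a ≤ φ x)
    (hs : 0 ≤ s) (hδ : 0 < δ) (hε : 0 < ε) :
    (1 - ENNReal.ofReal (Real.exp (-(δ * a)))) * Mpre dist f φ α (s + δ) (2 * ε) N K ≤
      Wpre dist f φ α s ε N K := by
  simp only [Wpre, le_iInf_iff]
  intro c m w I _ hm hw hK
  have : Nonempty X := ⟨c 0⟩
  refine (one_sub_mul_Mpre_le_tsum hφ ha₀ ha hs hδ hε (fun i : I => hm i i.2) hK).trans_eq ?_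
  exact tsum_congr fun i => (ENNReal.ofReal_mul (hw i i.2).le).symm

theorem Wpre_le_M1pre : Wpre dist f φ α s ε N K ≤ M1pre dist f φ α s ε N K := by
  simp only [M1pre, le_iInf_iff]
  intro c m I hI hm hK
  refine iInf_le_of_le c <| iInf_le_of_le m <| iInf_le_of_le (fun _ => 1) <| iInf_le_of_le I <|
    iInf_le_of_le hI <| iInf_le_of_le hm <| iInf_le_of_le (fun _ _ => one_pos) <|
    iInf_le_of_le (fun x hx => ?_) (by simp only [one_mul, le_refl])
  obtain ⟨i, hi, hxi⟩ := mem_iUnion₂.1 (hK hx)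
  refine le_trans ?_ (ENNReal.le_tsum (⟨i, hi⟩ : I))
  rw [indicator_of_mem hxi, ENNReal.ofReal_one]

theorem M1pre_anti {ε' : ℝ} (h : ε ≤ ε') : M1pre dist f φ α s ε' N K ≤ M1pre dist f φ α s ε N K :=
  iInf_mono fun _ => iInf_mono fun _ => iInf_mono fun _ => iInf_mono fun _ => iInf_mono fun _ =>
    iInf_mono' fun hK =>
      ⟨hK.trans (iUnion₂_mono fun _ _ => bowenBall_mono h), le_rfl⟩

theorem M1pre_mul_le_Mpre (hα : 0 ≤ α) (hs : 0 ≤ s) (hε : 0 < ε) {q : ℝ}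
    (hq : ∀ x y, dist x y < ε → φ y ≤ q * φ x) :
    M1pre dist f φ α (q * s) ε N K ≤ Mpre dist f φ α s ε N K :=
  iInf_mono fun _ => iInf_mono fun _ => iInf_mono fun _ => iInf_mono fun _ => iInf_mono fun _ =>
    iInf_mono fun _ => ENNReal.tsum_le_tsum fun _ => centerWeight_mul_le_supWeight hα hs hε hq

end CoveringSums

section Dimension

open scoped Topology

variable {X : Type*} [PseudoMetricSpace X] {f : X → X} {φ : X → ℝ} {α s δ a ε : ℝ} {K : Set X}

theorem Mlim_eq_zero_of_Wlim_eq_zero (hφ : BddAbove (range φ)) (ha₀ : 0 < a) (ha : ∀ x, a ≤ φ x)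
    (hs : 0 ≤ s) (hδ : 0 < δ) (hε : 0 < ε) (hW : Wlim dist f φ α s ε K = 0) :
    Mlim dist f φ α (s + δ) (2 * ε) K = 0 := by
  refine ENNReal.iSup_eq_zero.2 fun N => ?_
  have hle := one_sub_mul_Mpre_le_Wpre (f := f) (α := α) (N := N) (K := K) hφ ha₀ ha hs hδ hε
  rw [ENNReal.iSup_eq_zero.1 hW N, nonpos_iff_eq_zero] at hle
  exact (mul_eq_zero.1 hle).resolve_left
    (tsub_pos_of_lt (ofReal_exp_neg_lt_one (mul_pos hδ ha₀))).ne'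

theorem Mcrit_two_mul_le_Wcrit (hφ : BddAbove (range φ)) (ha₀ : 0 < a) (ha : ∀ x, a ≤ φ x)
    (hε : 0 < ε) : Mcrit dist f φ α (2 * ε) K ≤ Wcrit dist f φ α ε K := by
  simp only [Wcrit, le_iInf_iff]
  refine fun s hs hW => EReal.le_of_forall_lt_iff_le.1 fun z hz => ?_
  have hsz : s < z := EReal.coe_lt_coe_iff.1 hz
  have hM := Mlim_eq_zero_of_Wlim_eq_zero hφ ha₀ ha hs (sub_pos.2 hsz) hε hW
  rw [add_sub_cancel] at hM
  exact iInf₂_le_of_le z (hs.trans hsz.le) (iInf_le _ hM)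

theorem Wcrit_le_mul_Mcrit (hα : 0 ≤ α) {ε' q : ℝ} (hε : 0 < ε) (hεε' : ε ≤ ε') (hq₀ : 0 < q)
    (hq : ∀ x y, dist x y < ε → φ y ≤ q * φ x) :
    Wcrit dist f φ α ε' K ≤ q * Mcrit dist f φ α ε K := by
  have hq₀' : (0 : EReal) < q := EReal.coe_pos.2 hq₀
  rw [← EReal.div_le_iff_le_mul hq₀' (EReal.coe_ne_top q), Mcrit]
  refine le_iInf₂ fun s hs => le_iInf fun hM => ?_
  rw [EReal.div_le_iff_le_mul hq₀' (EReal.coe_ne_top q), ← EReal.coe_mul]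
  have hW : Wlim dist f φ α (q * s) ε' K ≤ Mlim dist f φ α s ε K := iSup_mono fun _ =>
    Wpre_le_M1pre.trans <| (M1pre_anti hεε').trans <| M1pre_mul_le_Mpre hα hs hε hq
  exact iInf₂_le_of_le (q * s) (by positivity) (iInf_le _ (nonpos_iff_eq_zero.1 (hM ▸ hW)))

theorem exists_forall_dist_lt_le_mul (hφ : UniformContinuous φ) (ha₀ : 0 < a) (ha : ∀ x, a ≤ φ x)
    {q : ℝ} (hq : 1 < q) : ∃ ε > 0, ∀ x y, dist x y < ε → φ y ≤ q * φ x := by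
  obtain ⟨ε, hε, hdist⟩ := Metric.uniformContinuous_iff.1 hφ ((q - 1) * a)
    (mul_pos (sub_pos.2 hq) ha₀)
  refine ⟨ε, hε, fun x y hxy => ?_⟩
  calc φ y ≤ φ x + (q - 1) * a := by
        linarith [(abs_lt.1 ((Real.dist_eq _ _).symm.trans_lt (hdist hxy))).1]
    _ ≤ φ x + (q - 1) * φ x := by gcongr; exact ha x
    _ = q * φ x := by ring

theorem dimBS_le_dimBSW (hφ : BddAbove (range φ)) (ha₀ : 0 < a) (ha : ∀ x, a ≤ φ x) :
    dimBS dist f φ α K ≤ dimBSW dist f φ α K := by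
  refine iSup₂_le fun ε hε => ?_
  calc Mcrit dist f φ α ε K = Mcrit dist f φ α (2 * (ε / 2)) K := by
        rw [mul_div_cancel₀ ε two_ne_zero]
    _ ≤ Wcrit dist f φ α (ε / 2) K := Mcrit_two_mul_le_Wcrit hφ ha₀ ha (half_pos hε)
    _ ≤ dimBSW dist f φ α K := le_iSup₂ (f := fun ε _ => Wcrit dist f φ α ε K) _ (half_pos hε)

theorem dimBSW_le_mul_dimBS (hα : 0 ≤ α) (hφ : UniformContinuous φ) (ha₀ : 0 < a)
    (ha : ∀ x, a ≤ φ x) {q : ℝ} (hq : 1 < q) :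
    dimBSW dist f φ α K ≤ q * dimBS dist f φ α K := by
  obtain ⟨η, hη, hη_le⟩ := exists_forall_dist_lt_le_mul hφ ha₀ ha hq
  have hq₀ : 0 < q := one_pos.trans hq
  refine iSup₂_le fun ε hε => ?_
  calc Wcrit dist f φ α ε K ≤ q * Mcrit dist f φ α (min ε η) K :=
        Wcrit_le_mul_Mcrit hα (lt_min hε hη) (min_le_left _ _) hq₀ fun x y hxy =>
          hη_le x y (hxy.trans_le (min_le_right _ _))
    _ ≤ q * dimBS dist f φ α K := mul_le_mul_of_nonneg_left
        (le_iSup₂ (f := fun ε _ => Mcrit dist f φ α ε K) _ (lt_min hε hη))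
        (EReal.coe_nonneg.2 hq₀.le)

theorem dimBSW_le_dimBS (hα : 0 ≤ α) (hφ : UniformContinuous φ) (ha₀ : 0 < a)
    (ha : ∀ x, a ≤ φ x) : dimBSW dist f φ α K ≤ dimBS dist f φ α K := by
  have hcoe : Tendsto (fun q : ℝ => (q : EReal)) (𝓝[>] 1) (𝓝 1) :=
    (continuous_coe_real_ereal.tendsto 1).mono_left nhdsWithin_le_nhds
  have hlim : Tendsto (fun q : ℝ => (q : EReal) * dimBS dist f φ α K) (𝓝[>] 1)
      (𝓝 (1 * dimBS dist f φ α K)) :=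
    EReal.Tendsto.mul_const hcoe (.inl one_ne_zero) (.inl one_ne_zero)
  rw [one_mul] at hlim
  exact ge_of_tendsto hlim (eventually_mem_nhdsWithin.mono fun _ hq =>
    dimBSW_le_mul_dimBS hα hφ ha₀ ha hq)

end Dimension

end AlphaBS

theorem stmt9_general {X : Type*} [PseudoMetricSpace X] (f : X → X) (K : Set X) {α : ℝ}
    (hα : 0 ≤ α) {φ : X → ℝ} (hφu : UniformContinuous φ) (hφb : BddAbove (range φ)) {a : ℝ}
    (ha₀ : 0 < a) (ha : ∀ x, a ≤ φ x) :
    dimBSW dist f φ α K = dimBS dist f φ α K :=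
  (dimBSW_le_dimBS hα hφu ha₀ ha).antisymm (dimBS_le_dimBSW hφb ha₀ ha)

/-- the weighted α-BS dimension coincides with the α-BS dimension. -/
theorem stmt9 {X : Type*} [MetricSpace X] [CompactSpace X]
    (f : X → X) (hf : Continuous f) (K : Set X) (α : ℝ) (hα : 0 ≤ α)
    (φ : X → ℝ) (hφc : Continuous φ) (hφ : ∀ x, 0 < φ x) :
    dimBSW dist f φ α K = dimBS dist f φ α K := by
  obtain ⟨a, ha₀, ha⟩ := isCompact_univ.exists_forall_le' hφc.continuousOn fun x _ => hφ x
  exact stmt9_general f K hα (CompactSpace.uniformContinuous_of_continuous hφc)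
    (isCompact_range hφc).bddAbove ha₀ fun x => ha x (mem_univ x)

end
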